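/- arXiv:1107.3318 — 2 statements merged into one kernel-verified Lean document; each statement's English description precedes it below -/
import Mathlib

section
/- Let $n$ be a squarefree positive integer, $q$ an integer coprime to $n$ that is not a perfect $p$-th power for any prime $p \mid n$, and $d \mid n$. Then the polynomial $x^d - q$ is irreducible over the cyclotomic field $\mathbb{Q}(\zeta_n)$. -/
/-!
Over a field, `X ^ d - a` with `4 ∤ d` is irreducible as soon as `a` is not a `p`-th power for any
prime `p ∣ d`: factors of odd degree are handled by norms, and coprime degrees can be combined
because the degree of any irreducible factor is divisible by both. So it remains to see that
passing from `ℚ` to `K = ℚ(ζₙ)` does not turn `q` into a `p`-th power.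

For odd `p` this holds in every abelian extension of `ℚ`: if `b ^ p = q` with `b ∉ ℚ`, then `ℚ(b)`
has degree `p` and, being normal, contains a nontrivial `p`-th root of unity, whose degree divides
`p` but is less than `p`.

For `p = 2` the obstruction is ramification. Write `q = c ^ 2 * a` with `a` squarefree and suppose
that `a` is a square in `𝓞 K`. A prime `r ∣ a` would be ramified in `K`, yet `r ∤ n`. Hence
`a = -1`, and `x ^ 2 = -1` gives `(1 + x) ^ 2 = 2 * x`, so `2` would be ramified, yet `4 ∤ n`.
-/

open Polynomial NumberField

section Irreducibility

variable {K : Type*} [Field K]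

theorem natDegree_dvd_natDegree_of_dvd_comp {f g h : K[X]} (hf : Irreducible f)
    (hg : Irreducible g) (hgf : g ∣ f.comp h) : f.natDegree ∣ g.natDegree := by
  have : Fact (Irreducible g) := ⟨hg⟩
  let basis := AdjoinRoot.powerBasis hg.ne_zero
  have : FiniteDimensional K (AdjoinRoot g) := basis.finite
  have hroot : aeval (aeval (AdjoinRoot.root g) h) f = 0 := by
    rw [← aeval_comp, AdjoinRoot.aeval_eq, AdjoinRoot.mk_eq_zero]
    exact hgf
  have hdvd : (minpoly K (aeval (AdjoinRoot.root g) h)).natDegree ∣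
      Module.finrank K (AdjoinRoot g) := minpoly.degree_dvd (Algebra.IsIntegral.isIntegral _)
  rwa [← minpoly.eq_of_irreducible hf hroot,
    natDegree_mul_C (inv_ne_zero (leadingCoeff_ne_zero.mpr hf.ne_zero)),
    basis.finrank, AdjoinRoot.powerBasis_dim] at hdvd

theorem X_pow_mul_sub_C_irreducible_of_coprime {m n : ℕ} (hmn : m.Coprime n) {a : K}
    (hm : Irreducible (X ^ m - C a)) (hn : Irreducible (X ^ n - C a)) :
    Irreducible (X ^ (m * n) - C a) := by
  have hm0 := ne_zero_of_irreducible_X_pow_sub_C hm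
  have hn0 := ne_zero_of_irreducible_X_pow_sub_C hn
  have hmonic := monic_X_pow_sub_C a (mul_ne_zero hm0 hn0)
  have hunit : ¬IsUnit (X ^ (m * n) - C a) :=
    not_isUnit_of_natDegree_pos _ (by rw [natDegree_X_pow_sub_C]; positivity)
  obtain ⟨g, hg, hdvd⟩ := WfDvdMonoid.exists_irreducible_factor hunit hmonic.ne_zero
  have hmg : m ∣ g.natDegree := by
    simpa only [natDegree_X_pow_sub_C] using natDegree_dvd_natDegree_of_dvd_comp hm hg
      (h := X ^ n) (by simpa [← pow_mul, mul_comm n m] using hdvd)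
  have hng : n ∣ g.natDegree := by
    simpa only [natDegree_X_pow_sub_C] using natDegree_dvd_natDegree_of_dvd_comp hn hg
      (h := X ^ m) (by simpa [← pow_mul] using hdvd)
  have hle : (X ^ (m * n) - C a).natDegree ≤ g.natDegree := by
    rw [natDegree_X_pow_sub_C]
    exact Nat.le_of_dvd hg.natDegree_pos (hmn.mul_dvd_of_dvd_of_dvd hmg hng)
  exact (associated_of_dvd_of_natDegree_le hdvd hmonic.ne_zero hle).irreducible hg

theorem X_pow_sub_C_irreducible_of_not_four_dvd {n : ℕ} (hn : ¬4 ∣ n) {a : K}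
    (ha : ∀ p : ℕ, p.Prime → p ∣ n → ∀ b : K, b ^ p ≠ a) : Irreducible (X ^ n - C a) := by
  rcases n.even_or_odd with heven | hodd
  · obtain ⟨m, rfl⟩ := heven.two_dvd
    have hm : Odd m := by
      rw [← Nat.not_even_iff_odd, even_iff_two_dvd]
      omega
    exact X_pow_mul_sub_C_irreducible_of_coprime (Nat.coprime_two_left.mpr hm)
      (X_pow_sub_C_irreducible_of_prime Nat.prime_two (ha 2 Nat.prime_two (dvd_mul_right 2 m)))
      (X_pow_sub_C_irreducible_of_odd hm fun p hp hpm => ha p hp (hpm.mul_left 2))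
  · exact X_pow_sub_C_irreducible_of_odd hodd ha

end Irreducibility

section FractionField

variable {R K : Type*} [CommRing R] [IsIntegrallyClosed R] [Field K] [Algebra R K]
  [IsFractionRing R K]

theorem exists_pow_eq_algebraMap_iff {k : ℕ} (hk : k ≠ 0) {a : R} :
    (∃ b : K, b ^ k = algebraMap R K a) ↔ ∃ c : R, c ^ k = a := by
  refine ⟨fun ⟨b, hb⟩ => ?_, fun ⟨c, hc⟩ => ⟨algebraMap R K c, by rw [← map_pow, hc]⟩⟩
  obtain ⟨c, rfl⟩ := IsIntegrallyClosed.exists_algebraMap_eq_of_isIntegral_pow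
    (Nat.pos_of_ne_zero hk) (hb ▸ isIntegral_algebraMap : IsIntegral R (b ^ k))
  exact ⟨c, IsFractionRing.injective R K (by rw [map_pow, hb])⟩

end FractionField

section AbelianExtension

variable {F K : Type*} [Field F] [Field K] [Algebra F K]

open IntermediateField

theorem mem_range_algebraMap_of_pow_prime_eq_one {p : ℕ} (hp : p.Prime) {ω : K} (hω : ω ^ p = 1)
    (hdeg : (minpoly F ω).natDegree ∣ p) : ω ∈ (algebraMap F K).range := by
  refine minpoly.natDegree_eq_one_iff.mp (((Nat.dvd_prime hp).mp hdeg).resolve_right fun h => ?_)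
  have hmonic : (X ^ p - C 1 : F[X]).Monic := monic_X_pow_sub_C 1 hp.ne_zero
  have hroot : aeval ω (X ^ p - C 1 : F[X]) = 0 := by simp [hω]
  have hω_int : IsIntegral F ω := ⟨X ^ p - C 1, hmonic, hroot⟩
  have hmin : minpoly F ω = X ^ p - C 1 :=
    (eq_of_monic_of_dvd_of_natDegree_le (minpoly.monic hω_int) hmonic (minpoly.dvd F ω hroot)
      (by rw [natDegree_X_pow_sub_C, h])).symm
  exact pow_ne_of_irreducible_X_pow_sub_C (hmin ▸ minpoly.irreducible hω_int) dvd_rfl hp.ne_one 1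
    (one_pow p)

theorem pow_prime_ne_algebraMap_of_isAbelianGalois [IsAbelianGalois F K] {p : ℕ} (hp : p.Prime)
    (hμ : ∀ ω : F, ω ^ p = 1 → ω = 1) {a : F} (ha : ∀ c : F, c ^ p ≠ a) (b : K) :
    b ^ p ≠ algebraMap F K a := by
  intro hb
  have hb_notMem : b ∉ Set.range (algebraMap F K) := by
    rintro ⟨c, rfl⟩
    exact ha c ((algebraMap F K).injective (by rw [map_pow, hb]))
  have hb0 : b ≠ 0 := fun h => hb_notMem ⟨0, by rw [map_zero, h]⟩
  have hb_int : IsIntegral F b := Algebra.IsIntegral.isIntegral b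
  have hdeg : (minpoly F b).natDegree = p := by
    rw [← minpoly.eq_of_irreducible_of_monic (X_pow_sub_C_irreducible_of_prime hp ha)
      (by simp [hb]) (monic_X_pow_sub_C a hp.ne_zero), natDegree_X_pow_sub_C]
  obtain ⟨σ, hσ⟩ : ∃ σ : Gal(K/F), σ b ≠ b := by
    simpa only [InfiniteGalois.mem_range_algebraMap_iff_fixed, not_forall] using hb_notMem
  have hσb : σ b ∈ F⟮b⟯ :=
    normal_iff_forall_map_le'.mp inferInstance σ ⟨b, mem_adjoin_simple_self F b, rfl⟩
  let ω : F⟮b⟯ := ⟨σ b / b, div_mem hσb (mem_adjoin_simple_self F b)⟩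
  have hω : ω ^ p = 1 := by
    apply Subtype.ext
    change (σ b / b) ^ p = 1
    rw [div_pow, ← map_pow, hb, AlgEquiv.commutes, ← hb, div_self (pow_ne_zero p hb0)]
  have : FiniteDimensional F F⟮b⟯ := adjoin.finiteDimensional hb_int
  have hω_deg : (minpoly F ω).natDegree ∣ p := by
    rw [← hdeg, ← adjoin.finrank hb_int]
    exact minpoly.degree_dvd (Algebra.IsIntegral.isIntegral ω)
  obtain ⟨ω₀, hω₀⟩ := mem_range_algebraMap_of_pow_prime_eq_one hp hω hω_deg
  have hω_one : ω = 1 := by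
    rw [← hω₀, hμ ω₀ ((algebraMap F F⟮b⟯).injective (by rw [map_pow, hω₀, hω, map_one])), map_one]
  exact hσ ((div_eq_one_iff_eq hb0).mp (congrArg Subtype.val hω_one))

theorem pow_prime_ne_intCast_of_isAbelianGalois_rat {L : Type*} [Field L] [Algebra ℚ L]
    [IsAbelianGalois ℚ L] {p : ℕ} (hp : p.Prime) (hodd : Odd p) {q : ℤ}
    (hq : ¬∃ x : ℤ, x ^ p = q) (b : L) : b ^ p ≠ q := by
  have hq_rat : ∀ c : ℚ, c ^ p ≠ q := fun c hc =>
    hq ((exists_pow_eq_algebraMap_iff (K := ℚ) hp.ne_zero).mp ⟨c, by simpa using hc⟩)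
  have hμ : ∀ ω : ℚ, ω ^ p = 1 → ω = 1 := fun ω hω =>
    hodd.pow_inj.mp (hω.trans (one_pow p).symm)
  simpa using pow_prime_ne_algebraMap_of_isAbelianGalois hp hμ hq_rat b

end AbelianExtension

section Unramified

theorem exists_sq_mul_squarefree_int (q : ℤ) : ∃ c a : ℤ, c ^ 2 * a = q ∧ Squarefree a := by
  obtain ⟨a, c, hac, ha⟩ := Nat.sq_mul_squarefree q.natAbs
  have hac' : (c : ℤ) ^ 2 * a = q.natAbs := by exact_mod_cast hac
  rcases q.natAbs_eq with hq | hq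
  · exact ⟨c, a, by rw [hac', ← hq], Int.squarefree_natCast.mpr ha⟩
  · exact ⟨c, -a, by rw [mul_neg, hac', ← hq], by
      rwa [← Int.squarefree_natAbs, Int.natAbs_neg, Int.natAbs_natCast]⟩

variable {S : Type*} [CommRing S] [IsDedekindDomain S]

theorem mem_of_pow_eq_mul {P : Ideal S} [P.IsPrime] {r x y : S} {k : ℕ} (hk : 2 ≤ k) (hr : r ∈ P)
    (hr_sq : r ∉ P ^ 2) (h : x ^ k = r * y) : y ∈ P := by
  have hx : x ∈ P := Ideal.IsPrime.mem_of_pow_mem ‹_› k (h ▸ P.mul_mem_right y hr)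
  have hxk : x ^ k ∈ P ^ 2 := Ideal.pow_le_pow_right hk (Ideal.pow_mem_pow hx k)
  exact (Ideal.IsPrime.mem_pow_mul P (h ▸ hxk)).resolve_left hr_sq

theorem sq_ne_neg_one_of_two_notMem_sq {P : Ideal S} [P.IsPrime] (h2 : 2 ∈ P) (h2_sq : 2 ∉ P ^ 2)
    (x : S) : x ^ 2 ≠ -1 := by
  intro hx
  have hxP : x ∈ P := mem_of_pow_eq_mul le_rfl h2 h2_sq (x := 1 + x) (by linear_combination hx)
  have hunit : IsUnit x := .of_mul_eq_one (-x) (by linear_combination -hx)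
  exact Ideal.IsPrime.ne_top ‹_› (P.eq_top_of_isUnit_mem hxP hunit)

theorem pow_ne_natCast_mul_intCast_of_notMem_sq {P : Ideal S} [P.IsPrime] {r : ℕ} (hr : r.Prime)
    (hrP : (r : S) ∈ P) (hrP_sq : (r : S) ∉ P ^ 2) {u : ℤ} (hru : ¬(r : ℤ) ∣ u) {k : ℕ}
    (hk : 2 ≤ k) (x : S) : x ^ k ≠ r * u := by
  intro hx
  have huP : (u : S) ∈ P := mem_of_pow_eq_mul hk hrP hrP_sq hx
  obtain ⟨s, t, hst⟩ : IsCoprime (r : ℤ) u :=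
    (Prime.coprime_iff_not_dvd (Nat.prime_iff_prime_int.mp hr)).mpr hru
  have hst_cast : (s : S) * r + t * u = 1 := by exact_mod_cast congrArg (Int.cast (R := S)) hst
  refine (P.ne_top_iff_one.mp (Ideal.IsPrime.ne_top ‹_›)) ?_
  exact hst_cast ▸ P.add_mem (P.mul_mem_left _ hrP) (P.mul_mem_left _ huP)

theorem sq_ne_intCast_of_forall_prime_unramified [CharZero S] {q : ℤ} (hq : ¬∃ x : ℤ, x ^ 2 = q)
    (hunram : ∀ r : ℕ, r.Prime → (r : ℤ) ∣ 2 * q →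
      ∃ P : Ideal S, P.IsPrime ∧ (r : S) ∈ P ∧ (r : S) ∉ P ^ 2) (b : S) :
    b ^ 2 ≠ q := by
  intro hb
  obtain ⟨c, a, rfl, ha⟩ := exists_sq_mul_squarefree_int q
  have hc : (c : S) ≠ 0 := Int.cast_ne_zero.mpr fun hc => hq ⟨0, by simp [hc]⟩
  obtain ⟨x, rfl⟩ : (c : S) ∣ b :=
    (IsIntegrallyClosed.pow_dvd_pow_iff two_ne_zero).mp ⟨a, by exact_mod_cast hb⟩
  have hx : x ^ 2 = a := mul_left_cancel₀ (pow_ne_zero 2 hc) (by rw [← mul_pow, hb]; push_cast; rfl)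
  by_cases ha_unit : IsUnit a
  · rcases Int.isUnit_iff.mp ha_unit with rfl | rfl
    · exact hq ⟨c, (mul_one _).symm⟩
    · obtain ⟨P, _, h2, h2_sq⟩ := hunram 2 Nat.prime_two (dvd_mul_right _ _)
      exact sq_ne_neg_one_of_two_notMem_sq h2 h2_sq x (by simpa using hx)
  · obtain ⟨r, hr, hra⟩ := Nat.exists_prime_and_dvd (Int.isUnit_iff_natAbs_eq.not.mp ha_unit)
    obtain ⟨u, rfl⟩ := Int.natCast_dvd.mpr hra
    obtain ⟨P, _, hrP, hrP_sq⟩ := hunram r hr ⟨2 * (c ^ 2 * u), by ring⟩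
    have hru : ¬(r : ℤ) ∣ u := fun h =>
      (Nat.prime_iff_prime_int.mp hr).not_isUnit (ha r (mul_dvd_mul_left _ h))
    exact pow_ne_natCast_mul_intCast_of_notMem_sq hr hrP hrP_sq hru le_rfl x (by simpa using hx)

theorem algebraMap_notMem_sq_of_ramificationIdx_eq_one {R : Type*} [CommRing R] [Algebra R S]
    {r : R} (hr : algebraMap R S r ≠ 0) {P : Ideal S} [P.IsPrime] [P.LiesOver (Ideal.span {r})]
    (hP : P.ramificationIdx R = 1) : algebraMap R S r ∉ P ^ 2 := by
  have hmap : (Ideal.span {r}).map (algebraMap R S) = Ideal.span {algebraMap R S r} := by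
    rw [Ideal.map_span, Set.image_singleton]
  have hne : (Ideal.span {r}).map (algebraMap R S) ≠ ⊥ := by
    rwa [hmap, Ne, Ideal.span_singleton_eq_bot]
  have hfin : FiniteMultiplicity P (Ideal.span {algebraMap R S r}) :=
    .of_not_isUnit (Ideal.isUnit_iff.not.mpr (Ideal.IsPrime.ne_top ‹_›)) (hmap ▸ hne)
  rw [← Ideal.dvd_span_singleton]
  apply hfin.not_pow_dvd_of_multiplicity_lt
  rw [← hmap, ← Ideal.IsDedekindDomain.ramificationIdx_eq_multiplicity (Ideal.span {r}) P hne, hP]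
  exact one_lt_two

end Unramified

section Cyclotomic

open IsCyclotomicExtension.Rat

variable {K : Type*} [Field K] {n : ℕ} [NeZero n]

section NumberField

variable [NumberField K] [IsCyclotomicExtension {n} ℚ K]

theorem ramificationIdx_eq_one_of_isCyclotomicExtension {r : ℕ} [Fact r.Prime]
    (h : r ∣ n → r = 2 ∧ ¬4 ∣ n) (P : Ideal (𝓞 K)) [P.IsPrime]
    [P.LiesOver (Ideal.span {(r : ℤ)})] : P.ramificationIdx ℤ = 1 := by
  by_cases hrn : r ∣ n
  · obtain ⟨rfl, h4⟩ := h hrn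
    obtain ⟨m, rfl⟩ := hrn
    have hm : ¬2 ∣ m := fun hm => h4 (mul_dvd_mul_left 2 hm)
    rw [ramificationIdx_eq (2 * m) K P (by rw [zero_add, pow_one]) hm, pow_zero, one_mul]
  · exact ramificationIdx_eq_of_not_dvd r K P hrn

theorem exists_isPrime_notMem_sq_of_isCyclotomicExtension {r : ℕ} (hr : r.Prime)
    (h : r ∣ n → r = 2 ∧ ¬4 ∣ n) :
    ∃ P : Ideal (𝓞 K), P.IsPrime ∧ (r : 𝓞 K) ∈ P ∧ (r : 𝓞 K) ∉ P ^ 2 := by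
  have : Fact r.Prime := ⟨hr⟩
  have : (Ideal.span {(r : ℤ)}).IsPrime :=
    (Ideal.span_singleton_prime (by exact_mod_cast hr.ne_zero)).mpr (Nat.prime_iff_prime_int.mp hr)
  obtain ⟨P, _, _⟩ := (Ideal.span {(r : ℤ)}).nonempty_primesOver (S := 𝓞 K)
  refine ⟨P, ‹_›, ?_, ?_⟩
  · simpa using (Ideal.mem_of_liesOver P (Ideal.span {(r : ℤ)}) r).mp
      (Ideal.mem_span_singleton_self _)
  · simpa using algebraMap_notMem_sq_of_ramificationIdx_eq_one (r := (r : ℤ))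
      (by simpa using hr.ne_zero) (ramificationIdx_eq_one_of_isCyclotomicExtension h P)

end NumberField

variable [CharZero K] [IsCyclotomicExtension {n} ℚ K]

theorem sq_ne_intCast_of_isCyclotomicExtension (hn : ¬4 ∣ n) {q : ℤ} (hco : IsCoprime q n)
    (hq : ¬∃ x : ℤ, x ^ 2 = q) (b : K) : b ^ 2 ≠ q := by
  have : NumberField K := IsCyclotomicExtension.numberField {n} ℚ K
  intro hb
  obtain ⟨x, hx⟩ := (exists_pow_eq_algebraMap_iff (R := 𝓞 K) two_ne_zero (a := (q : 𝓞 K))).mp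
    ⟨b, by rw [hb, map_intCast]⟩
  refine sq_ne_intCast_of_forall_prime_unramified hq (fun r hr hrq => ?_) x hx
  refine exists_isPrime_notMem_sq_of_isCyclotomicExtension (n := n) hr fun hrn => ⟨?_, hn⟩
  have hr_int : Prime (r : ℤ) := Nat.prime_iff_prime_int.mp hr
  have hrq' : ¬(r : ℤ) ∣ q := fun h =>
    hr_int.not_isUnit (hco.isUnit_of_dvd' h (Int.natCast_dvd_natCast.mpr hrn))
  have hr2 : (r : ℤ) ∣ 2 := (hr_int.dvd_or_dvd hrq).resolve_right hrq'
  exact (Nat.prime_dvd_prime_iff_eq hr Nat.prime_two).mp (by exact_mod_cast hr2)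

theorem stmt_9_general {q : ℤ} {d : ℕ} (hd : ¬4 ∣ d) (hn : 2 ∣ d → ¬4 ∣ n)
    (hco : 2 ∣ d → IsCoprime q n) (hpow : ∀ p : ℕ, p.Prime → p ∣ d → ¬∃ x : ℤ, x ^ p = q) :
    Irreducible (X ^ d - C (q : K)) := by
  refine X_pow_sub_C_irreducible_of_not_four_dvd hd fun p hp hpd b => ?_
  rcases hp.eq_two_or_odd' with rfl | hodd
  · exact sq_ne_intCast_of_isCyclotomicExtension (hn hpd) (hco hpd) (hpow 2 hp hpd) b
  · have : IsAbelianGalois ℚ K := IsCyclotomicExtension.isAbelianGalois {n} ℚ K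
    exact pow_prime_ne_intCast_of_isAbelianGalois_rat hp hodd (hpow p hp hpd) b

end Cyclotomic

open Polynomial in
theorem stmt_9 (n : ℕ+) (hsq : Squarefree (n : ℕ)) (q : ℤ)
    (hco : IsCoprime q (n : ℤ))
    (hpow : ∀ p : ℕ, p.Prime → p ∣ (n : ℕ) → ¬∃ x : ℤ, x ^ p = q)
    (d : ℕ) (hd : d ∣ (n : ℕ)) :
    Irreducible (X ^ d - C (q : CyclotomicField n ℚ)) := by
  have hn : ¬4 ∣ (n : ℕ) := fun h => by simpa using hsq 2 h
  -- `CyclotomicField` comes with its own `ℚ`-algebra structure, not reducibly the canonical one.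
  have : @IsCyclotomicExtension {(n : ℕ)} ℚ (CyclotomicField n ℚ) _ _
      DivisionRing.toRatAlgebra := by
    rw [Subsingleton.elim DivisionRing.toRatAlgebra (CyclotomicField.algebra (n : ℕ) ℚ)]
    infer_instance
  exact stmt_9_general (n := n) (fun h => hn (h.trans hd)) (fun _ => hn) (fun _ => hco)
    fun p hp hpd => hpow p hp (hpd.trans hd)
end

section
/- Let $n$ be a squarefree positive integer, $q$ an integer coprime to $n$ not a perfect $p$-th power for any prime $p \mid n$, and $d \mid n$. Then $L = \mathbb{Q}(q^{1/d}, \zeta_n)$ is a normal extension of $\mathbb{Q}$ of degree $[L : \mathbb{Q}] = d \cdot \varphi(n)$. -/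
/-!
Over `K = ℚ(ζₙ)`, which contains the `d`-th roots of unity, `X ^ d - q` is irreducible as soon as
`q` is not a `p`-th power in `K` for any prime `p ∣ d`; so everything rests on descending an
equation `q = a ^ p` from `K` to `ℤ`. The discriminant of `K` divides a power of `n`, so every
prime `l ∣ q` is unramified in `K` and its exponent in `q` is `p` times a valuation of `a`. Hence
`|q|` is a `p`-th power. The sign only matters for `p = 2` and `q = -y ^ 2`, where `a / y` is a
square root of `-1` in `K`, which forces `4 ∣ n`.
-/

open Polynomial
open scoped NumberField

section Kummer

variable {K : Type*} [Field K]

theorem exists_pow_div_gcd_eq_of_pow_eq_pow {ζ x a : K} {d m : ℕ} (hd : d ≠ 0)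
    (hζ : IsPrimitiveRoot ζ d) (h : x ^ d = a ^ m) : ∃ b, b ^ (d / d.gcd m) = a := by
  obtain ⟨d', m', hcop, hd', hm'⟩ := Nat.exists_coprime d m
  set g := d.gcd m
  have hg : 0 < g := Nat.gcd_pos_of_pos_left m (Nat.pos_of_ne_zero hd)
  have : NeZero g := ⟨hg.ne'⟩
  rw [Nat.div_eq_of_eq_mul_left hg hd']
  obtain rfl | ha := eq_or_ne a 0
  · exact ⟨0, zero_pow (by rintro rfl; omega)⟩
  have hζ_pow : IsPrimitiveRoot (ζ ^ d') g := hζ.pow (Nat.pos_of_ne_zero hd) hd'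
  have hpow : (x ^ d') ^ g = (a ^ m') ^ g := by rw [← pow_mul, ← pow_mul, ← hd', ← hm', h]
  obtain ⟨i, -, hi⟩ : ∃ i < g, (ζ ^ d') ^ i = x ^ d' / a ^ m' :=
    hζ_pow.eq_pow_of_pow_eq_one (by rw [div_pow, hpow, div_self (by positivity)])
  have hζi : (ζ ^ i) ^ d' ≠ 0 := pow_ne_zero _ (pow_ne_zero _ (hζ.ne_zero hd))
  have hquot : (x / ζ ^ i) ^ d' = a ^ m' := by
    rw [eq_div_iff (by positivity)] at hi
    rw [div_pow, div_eq_iff hζi, ← hi]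
    ring
  exact (pow_mem_range_pow_of_coprime hcop.symm a).mp ⟨x / ζ ^ i, hquot⟩

theorem X_pow_sub_C_irreducible_of_isPrimitiveRoot {ζ a : K} {d : ℕ} (hd : d ≠ 0)
    (hζ : IsPrimitiveRoot ζ d) (ha : ∀ p : ℕ, p.Prime → p ∣ d → ∀ b : K, b ^ p ≠ a) :
    Irreducible (X ^ d - C a) := by
  have hne : X ^ d - C a ≠ 0 := X_pow_sub_C_ne_zero (Nat.pos_of_ne_zero hd) a
  have hunit : ¬IsUnit (X ^ d - C a) := by
    simpa [isUnit_iff_degree_eq_zero, degree_X_pow_sub_C (Nat.pos_of_ne_zero hd)] using hd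
  obtain ⟨g, hg, hgdvd⟩ := WfDvdMonoid.exists_irreducible_factor hunit hne
  have := Fact.mk hg
  have hroot : AdjoinRoot.root g ^ d = algebraMap K (AdjoinRoot g) a := by
    have := eval₂_eq_zero_of_dvd_of_eval₂_eq_zero _ _ hgdvd (AdjoinRoot.eval₂_root g)
    simpa [sub_eq_zero] using this
  have hnorm : Algebra.norm K (AdjoinRoot.root g) ^ d = a ^ g.natDegree := by
    rw [← map_pow, hroot, Algebra.norm_algebraMap, (AdjoinRoot.powerBasis hg.ne_zero).finrank,
      AdjoinRoot.powerBasis_dim]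
  have hdvd : d ∣ g.natDegree := by
    obtain ⟨b, hb⟩ := exists_pow_div_gcd_eq_of_pow_eq_pow hd hζ hnorm
    rw [← Nat.gcd_eq_left_iff_dvd]
    by_contra hgcd
    obtain ⟨p, hp, hpdvd⟩ := Nat.exists_prime_and_dvd (n := d / d.gcd g.natDegree) fun h ↦
      hgcd (Nat.eq_of_dvd_of_div_eq_one (Nat.gcd_dvd_left _ _) h)
    have hpd : p ∣ d := hpdvd.trans (Nat.div_dvd_of_dvd (Nat.gcd_dvd_left _ _))
    obtain ⟨k, hk⟩ := hpdvd
    exact ha p hp hpd (b ^ k) (by rw [← pow_mul, mul_comm, ← hk, hb])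
  have hle : (X ^ d - C a).natDegree ≤ g.natDegree := by
    simpa using Nat.le_of_dvd hg.natDegree_pos hdvd
  exact (associated_of_dvd_of_natDegree_le hgdvd hne hle).irreducible hg

end Kummer

section SplittingField

variable {F : Type*} [Field F] {n d : ℕ} [NeZero n] {a : F}

variable (n) in
theorem isSplittingField_X_pow_sub_C_mul_X_pow_sub_one (K M : Type*) [Field K] [Field M]
    [Algebra F K] [Algebra F M] [Algebra K M] [IsScalarTower F K M]
    [IsCyclotomicExtension {n} F K] [IsSplittingField K M (X ^ d - C (algebraMap F K a))]
    (hd : d ≠ 0) : IsSplittingField F M ((X ^ d - C a) * (X ^ n - 1)) := by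
  have : IsSplittingField F K (X ^ n - 1) :=
    IsCyclotomicExtension.isSplittingField_X_pow_sub_one n F K
  have : IsSplittingField K M ((X ^ d - C a).map (algebraMap F K)) := by simpa
  rw [mul_comm]
  exact IsSplittingField.mul (K := K) M _ _ (X_pow_sub_C_ne_zero (NeZero.pos n) 1)
    (X_pow_sub_C_ne_zero (Nat.pos_of_ne_zero hd) a)

theorem finrank_of_isSplittingField_X_pow_sub_C_mul_X_pow_sub_one (K L : Type*) [Field K]
    [Field L] [Algebra F K] [Algebra F L] [IsCyclotomicExtension {n} F K]
    [IsSplittingField F L ((X ^ d - C a) * (X ^ n - 1))] (hd : (primitiveRoots d K).Nonempty)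
    (hirr : Irreducible (X ^ d - C (algebraMap F K a))) :
    Module.finrank F L = d * Module.finrank F K := by
  let M := SplittingField (X ^ d - C (algebraMap F K a))
  have : IsSplittingField F M ((X ^ d - C a) * (X ^ n - 1)) :=
    isSplittingField_X_pow_sub_C_mul_X_pow_sub_one n K M (ne_zero_of_irreducible_X_pow_sub_C hirr)
  have e : L ≃ₐ[F] M := (IsSplittingField.algEquiv L ((X ^ d - C a) * (X ^ n - 1))).trans
    (IsSplittingField.algEquiv M ((X ^ d - C a) * (X ^ n - 1))).symm
  calc Module.finrank F L = Module.finrank F M := e.toLinearEquiv.finrank_eq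
    _ = Module.finrank F K * Module.finrank K M := (Module.finrank_mul_finrank F K M).symm
    _ = d * Module.finrank F K := by
      rw [finrank_of_isSplittingField_X_pow_sub_C hd hirr M, mul_comm]

/-- The `ℚ`-algebra structure here is the one every field of characteristic zero carries, not the
one that `SplittingField` is constructed with. -/
theorem isSplittingField_splittingField_rat (f : ℚ[X]) : IsSplittingField ℚ f.SplittingField f := by
  convert! IsSplittingField.splittingField f

end SplittingField

section Unramified

theorem exists_eq_pow_of_forall_dvd_factorization {a k : ℕ} (hk : k ≠ 0)
    (h : ∀ l : ℕ, l.Prime → k ∣ a.factorization l) : ∃ y, a = y ^ k := by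
  obtain rfl | ha := eq_or_ne a 0
  · exact ⟨0, (zero_pow hk).symm⟩
  refine ⟨k.floorRoot a, Nat.eq_of_factorization_eq ha
    (pow_ne_zero _ (Nat.floorRoot_ne_zero.2 ⟨hk, ha⟩)) fun l ↦ ?_⟩
  by_cases hl : l.Prime
  · simp [Finsupp.floorDiv_apply, Nat.floorDiv_eq_div, Nat.mul_div_cancel' (h l hl)]
  · simp [Nat.factorization_eq_zero_of_not_prime, hl]

open Ideal in
theorem dvd_emultiplicity_span_of_pow_eq_algebraMap {R S : Type*} [CommRing R]
    [IsDedekindDomain R] [CommRing S] [IsDedekindDomain S] [Algebra R S] [FaithfulSMul R S]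
    {v : Ideal R} [v.IsPrime] (hv : v ≠ ⊥) (w : Ideal S) [w.IsPrime] [w.LiesOver v]
    (hw : w.ramificationIdx R = 1) {x : R} (hx : x ≠ 0) {b : S} {k : ℕ}
    (h : b ^ k = algebraMap R S x) : (k : ℕ∞) ∣ emultiplicity v (span {x}) := by
  have hw0 : w ≠ ⊥ := ne_bot_of_liesOver_of_ne_bot hv w
  have hw_prime : Prime w := prime_of_isPrime hw0 ‹_›
  refine ⟨emultiplicity w (span {b}), ?_⟩
  calc emultiplicity v (span {x}) = emultiplicity w ((span {x}).map (algebraMap R S)) := by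
        rw [IsDedekindDomain.emultiplicity_map_eq_ramificationIdx'_mul (by simpa)
          (prime_of_isPrime hv ‹_›).irreducible hw_prime.irreducible hw0,
          ramificationIdx'_eq_ramificationIdx v w hv, hw, Nat.cast_one, one_mul]
    _ = emultiplicity w (span {b} ^ k) := by
        rw [map_span, Set.image_singleton, ← h, span_singleton_pow]
    _ = k * emultiplicity w (span {b}) := emultiplicity_pow hw_prime

theorem exists_natAbs_eq_pow_of_isCoprime_discr {K : Type*} [Field K] [NumberField K] {q : ℤ}
    (hq : IsCoprime q (NumberField.discr K)) {k : ℕ} (hk : k ≠ 0) {a : K} (ha : a ^ k = q) :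
    ∃ y : ℕ, q.natAbs = y ^ k := by
  obtain rfl | hq0 := eq_or_ne q 0
  · exact ⟨0, by simp [hk]⟩
  obtain ⟨b, rfl⟩ : ∃ b : 𝓞 K, b = a :=
    ⟨⟨a, .of_pow (Nat.pos_of_ne_zero hk) (ha ▸ isIntegral_algebraMap (R := ℤ) (x := q))⟩, rfl⟩
  have hb : b ^ k = algebraMap ℤ (𝓞 K) q := NumberField.RingOfIntegers.ext (by simpa using ha)
  refine exists_eq_pow_of_forall_dvd_factorization hk fun l hl ↦ ?_
  by_cases hlq : l ∣ q.natAbs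
  swap
  · simp [Nat.factorization_eq_zero_of_not_dvd hlq]
  have hl_prime : Prime (l : ℤ) := Nat.prime_iff_prime_int.1 hl
  have hl_discr : ¬(l : ℤ) ∣ NumberField.discr K := fun h ↦
    hl_prime.not_isUnit (hq.isUnit_of_dvd' (Int.natCast_dvd.2 hlq) h)
  have hunram : Algebra.IsUnramifiedIn (𝓞 K) (Ideal.span {(l : ℤ)}) :=
    (NumberField.not_dvd_discr_iff_isUnramifiedIn K (𝓞 K) hl_prime).1 hl_discr
  have : (Ideal.span {(l : ℤ)}).IsPrime :=
    (Ideal.span_singleton_prime hl_prime.ne_zero).2 hl_prime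
  obtain ⟨P, hP, hP_over⟩ := (Ideal.span {(l : ℤ)}).nonempty_primesOver (S := 𝓞 K)
  have hdvd : (k : ℕ∞) ∣ emultiplicity (Ideal.span {(l : ℤ)}) (Ideal.span {q}) :=
    dvd_emultiplicity_span_of_pow_eq_algebraMap (by simpa using hl_prime.ne_zero) P
      (hunram.ramificationIdx_eq_one hP_over) hq0 hb
  have := Fact.mk hl
  rw [Ideal.emultiplicity_eq_emultiplicity_span, ← Int.emultiplicity_natAbs,
    ← padicValNat_eq_emultiplicity (by simpa)] at hdvd
  rw [Nat.factorization_def _ hl]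
  simpa using map_dvd ENat.toNatHom hdvd

end Unramified

section Cyclotomic

variable (n : ℕ) [NeZero n] {K : Type*} [Field K] [NumberField K] [IsCyclotomicExtension {n} ℚ K]

variable (K) in
theorem discr_dvd_pow_totient_of_isCyclotomicExtension :
    NumberField.discr K ∣ (n : ℤ) ^ n.totient := by
  rw [← Int.natAbs_dvd, IsCyclotomicExtension.Rat.natAbs_discr n K]
  exact_mod_cast Nat.div_dvd_of_dvd (Nat.prod_primeFactors_pow_totient_ediv_dvd (NeZero.pos n))

theorem four_dvd_of_sq_eq_neg_one_of_isCyclotomicExtension {i : K} (hi : i ^ 2 = -1) : 4 ∣ n := by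
  have horder : orderOf i = 2 ^ (1 + 1) :=
    orderOf_eq_prime_pow (by norm_num [hi]) (by rw [pow_add, pow_one, pow_mul, hi, neg_one_sq])
  have hdvd : 4 ∣ NumberField.Units.torsionOrder K :=
    NumberField.Units.dvd_torsionOrder_of_isPrimitiveRoot (horder ▸ IsPrimitiveRoot.orderOf i)
  rw [IsCyclotomicExtension.Rat.torsionOrder_eq (n := n)] at hdvd
  grind

theorem exists_int_pow_eq_of_isCyclotomicExtension {q : ℤ} (hq : IsCoprime q n) {p : ℕ}
    (hp : p.Prime) (hneg : 4 ∣ n → p = 2 → ¬∃ x : ℤ, x ^ 2 = -q) {a : K} (ha : a ^ p = q) :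
    ∃ x : ℤ, x ^ p = q := by
  have hdiscr : IsCoprime q (NumberField.discr K) :=
    hq.pow_right.of_isCoprime_of_dvd_right (discr_dvd_pow_totient_of_isCyclotomicExtension n K)
  obtain ⟨y, hy⟩ := exists_natAbs_eq_pow_of_isCoprime_discr hdiscr hp.ne_zero ha
  obtain hqy | hqy : q = y ^ p ∨ q = -y ^ p := by simpa [hy] using Int.natAbs_eq q
  · exact ⟨y, hqy.symm⟩
  obtain rfl | hodd := hp.eq_two_or_odd'
  · obtain rfl | hy0 := eq_or_ne y 0
    · exact ⟨0, by simp [hqy]⟩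
    have hi : (a / y) ^ 2 = -1 := by
      rw [div_pow, ha, hqy]
      push_cast
      rw [neg_div, div_self (by positivity)]
    exact absurd ⟨y, by rw [hqy, neg_neg]⟩
      (hneg (four_dvd_of_sq_eq_neg_one_of_isCyclotomicExtension n hi) rfl)
  · exact ⟨-y, by rw [hodd.neg_pow, hqy]⟩

theorem X_pow_sub_C_irreducible_of_isCyclotomicExtension {q : ℤ} (hq : IsCoprime q n) {d : ℕ}
    (hd : d ≠ 0) {ζ : K} (hζ : IsPrimitiveRoot ζ d)
    (hpow : ∀ p : ℕ, p.Prime → p ∣ d → ¬∃ x : ℤ, x ^ p = q)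
    (hneg : 4 ∣ n → 2 ∣ d → ¬∃ x : ℤ, x ^ 2 = -q) : Irreducible (X ^ d - C (q : K)) :=
  X_pow_sub_C_irreducible_of_isPrimitiveRoot hd hζ fun p hp hpd _ hb ↦ hpow p hp hpd <|
    exists_int_pow_eq_of_isCyclotomicExtension n hq hp (fun h4 h2 ↦ hneg h4 (h2 ▸ hpd)) hb

end Cyclotomic

/-- If `4 ∣ n`, then `-1` is a square in `ℚ(ζₙ)`, hence the condition on `-q` for even `d`. -/
theorem stmt_10_general (n : ℕ) (hn : 0 < n) (q : ℤ) (hco : IsCoprime q (n : ℤ)) (d : ℕ)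
    (hd : d ∣ n) (hpow : ∀ p : ℕ, p.Prime → p ∣ d → ¬∃ x : ℤ, x ^ p = q)
    (hneg : 4 ∣ n → 2 ∣ d → ¬∃ x : ℤ, x ^ 2 = -q) (L : Type*) [Field L] [Algebra ℚ L]
    [IsSplittingField ℚ L ((X ^ d - C (q : ℚ)) * (X ^ n - 1))] :
    Normal ℚ L ∧ Module.finrank ℚ L = d * n.totient := by
  have : NeZero n := ⟨hn.ne'⟩
  have hd_pos : 0 < d := Nat.pos_of_dvd_of_pos hd hn
  let K := CyclotomicField n ℚ
  have : IsCyclotomicExtension {n} ℚ K := by convert! CyclotomicField.isCyclotomicExtension n ℚ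
  obtain ⟨e, he⟩ := hd
  have hζ : IsPrimitiveRoot (IsCyclotomicExtension.zeta n ℚ K ^ e) d :=
    (IsCyclotomicExtension.zeta_spec n ℚ K).pow hn (he.trans (mul_comm d e))
  have hirr : Irreducible (X ^ d - C (algebraMap ℚ K q)) := by
    rw [map_intCast]
    exact X_pow_sub_C_irreducible_of_isCyclotomicExtension n hco hd_pos.ne' hζ hpow hneg
  refine ⟨.of_isSplittingField ((X ^ d - C (q : ℚ)) * (X ^ n - 1)), ?_⟩
  rw [finrank_of_isSplittingField_X_pow_sub_C_mul_X_pow_sub_one (n := n) K L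
    ⟨_, (mem_primitiveRoots hd_pos).2 hζ⟩ hirr, IsCyclotomicExtension.Rat.finrank n K]

open Polynomial in
theorem stmt_10 (n : ℕ) (hn : 0 < n) (hsq : Squarefree n) (q : ℤ)
    (hco : IsCoprime q (n : ℤ))
    (hpow : ∀ p : ℕ, p.Prime → p ∣ n → ¬∃ x : ℤ, x ^ p = q)
    (d : ℕ) (hd : d ∣ n) :
    Normal ℚ ((X ^ d - C (q : ℚ)) * (X ^ n - 1)).SplittingField ∧
      Module.finrank ℚ ((X ^ d - C (q : ℚ)) * (X ^ n - 1)).SplittingField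
        = d * Nat.totient n := by
  have := isSplittingField_splittingField_rat ((X ^ d - C (q : ℚ)) * (X ^ n - 1))
  exact stmt_10_general n hn q hco d hd (fun p hp hpd ↦ hpow p hp (hpd.trans hd))
    (fun h4 ↦ absurd (hsq 2 h4) (by simp)) _
end
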